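/- For every real β, ∫_{-∞}^{∞} cos(βξ) sech⁴(ξ) dξ = πβ(β²+4) / (6 sinh(πβ/2)), where the right-hand side is interpreted as its limit 4/3 when β = 0. -/

import Mathlib

open Real MeasureTheory

noncomputable def sech (x : ℝ) : ℝ := (Real.cosh x)⁻¹

/-!
Under the substitution `x = sigmoid (2 * t)` one has `x = exp t * sech t / 2` and
`1 - x = exp (-t) * sech t / 2`, so Euler's beta integral `B((a + z) / 2, (a - z) / 2)` becomes the
integral of `exp (z * t) * sech t ^ a`. For real `a` and `z = iβ` the two arguments are conjugate,
so the integral of `cos (β * t) * sech t ^ a` is a multiple of `‖Γ((a + iβ) / 2)‖²`, which for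
`a = 4` is elementary by `Γ(s + 1) = s * Γ(s)` and Euler's reflection formula.
-/

section SigmoidSubstitution

variable {E : Type*} [NormedAddCommGroup E] [NormedSpace ℝ E] (f : ℝ → E)

lemma integrable_deriv_smul_comp_sigmoid_iff :
    Integrable (fun t : ℝ => (sigmoid t * sigmoid (-t)) • f (sigmoid t)) ↔
      IntegrableOn f (Set.Ioo 0 1) := by
  rw [← range_sigmoid, ← Set.image_univ,
    integrableOn_image_iff_integrableOn_deriv_smul_of_monotoneOn MeasurableSet.univ
      (fun t _ => (hasDerivAt_sigmoid t).hasDerivWithinAt) (sigmoid_monotone.monotoneOn _),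
    integrableOn_univ]
  simp only [sigmoid_neg]

lemma integral_deriv_smul_comp_sigmoid :
    ∫ t : ℝ, (sigmoid t * sigmoid (-t)) • f (sigmoid t) = ∫ x in Set.Ioo 0 1, f x := by
  rw [← range_sigmoid, ← Set.image_univ,
    integral_image_eq_integral_deriv_smul_of_monotoneOn MeasurableSet.univ
      (fun t _ => (hasDerivAt_sigmoid t).hasDerivWithinAt) (sigmoid_monotone.monotoneOn _),
    setIntegral_univ]
  simp only [sigmoid_neg]

end SigmoidSubstitution

lemma sigmoid_cpow_mul_sigmoid_neg_cpow_eq_smul (u v : ℂ) (t : ℝ) :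
    (sigmoid t : ℂ) ^ u * (sigmoid (-t) : ℂ) ^ v =
      (sigmoid t * sigmoid (-t)) •
        ((sigmoid t : ℂ) ^ (u - 1) * (1 - (sigmoid t : ℂ)) ^ (v - 1)) := by
  have sigmoid_ne_zero : (sigmoid t : ℂ) ≠ 0 := mod_cast (sigmoid_pos t).ne'
  have sigmoid_neg_ne_zero : (sigmoid (-t) : ℂ) ≠ 0 := mod_cast (sigmoid_pos (-t)).ne'
  have one_sub : 1 - (sigmoid t : ℂ) = sigmoid (-t) := by simp [sigmoid_neg]
  rw [one_sub, Complex.cpow_sub _ _ sigmoid_ne_zero, Complex.cpow_sub _ _ sigmoid_neg_ne_zero,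
    Complex.cpow_one, Complex.cpow_one, Complex.real_smul, Complex.ofReal_mul]
  field_simp

lemma integrable_sigmoid_cpow_mul_sigmoid_neg_cpow {u v : ℂ} (hu : 0 < u.re)
    (hv : 0 < v.re) :
    Integrable fun t : ℝ => (sigmoid t : ℂ) ^ u * (sigmoid (-t) : ℂ) ^ v := by
  simp only [sigmoid_cpow_mul_sigmoid_neg_cpow_eq_smul u v]
  rw [integrable_deriv_smul_comp_sigmoid_iff
      fun x : ℝ => (x : ℂ) ^ (u - 1) * (1 - (x : ℂ)) ^ (v - 1),
    ← intervalIntegrable_iff_integrableOn_Ioo_of_le zero_le_one]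
  exact Complex.betaIntegral_convergent hu hv

/-- If `u` or `v` has nonpositive real part, neither side converges and both have the junk value
`0`. -/
lemma integral_sigmoid_cpow_mul_sigmoid_neg_cpow (u v : ℂ) :
    ∫ t : ℝ, (sigmoid t : ℂ) ^ u * (sigmoid (-t) : ℂ) ^ v = Complex.betaIntegral u v := by
  simp only [sigmoid_cpow_mul_sigmoid_neg_cpow_eq_smul u v]
  rw [integral_deriv_smul_comp_sigmoid
      fun x : ℝ => (x : ℂ) ^ (u - 1) * (1 - (x : ℂ)) ^ (v - 1),
    Complex.betaIntegral, intervalIntegral.integral_of_le zero_le_one, integral_Ioc_eq_integral_Ioo]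

lemma betaIntegral_self_conj {u : ℂ} (hu : 0 < u.re) :
    Complex.betaIntegral u (starRingEnd ℂ u) =
      (‖Complex.Gamma u‖ ^ 2 / Real.Gamma (2 * u.re) : ℝ) := by
  rw [Complex.betaIntegral_eq_Gamma_mul_div _ _ hu (by simpa using hu), Complex.Gamma_conj,
    Complex.mul_conj', Complex.add_conj, Complex.Gamma_ofReal]
  push_cast
  rfl

lemma sech_pos (t : ℝ) : 0 < sech t := inv_pos.2 (cosh_pos t)

lemma sech_neg (t : ℝ) : sech (-t) = sech t := by rw [sech, sech, cosh_neg]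

lemma sigmoid_two_mul (t : ℝ) : sigmoid (2 * t) = rexp t * sech t / 2 := by
  have exp_neg_two_mul : rexp (-(2 * t)) = rexp (-t) / rexp t := by rw [← Real.exp_sub]; ring_nf
  rw [sigmoid_def, sech, cosh_eq, exp_neg_two_mul]
  field_simp

lemma sigmoid_two_mul_cpow (t : ℝ) (u : ℂ) :
    (sigmoid (2 * t) : ℂ) ^ u = Complex.exp (u * t) * (sech t : ℂ) ^ u / 2 ^ u := by
  have exp_cpow : (rexp t : ℂ) ^ u = Complex.exp (u * t) := by
    rw [Complex.cpow_def_of_ne_zero (mod_cast (Real.exp_pos t).ne'),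
      ← Complex.ofReal_log (Real.exp_pos t).le, Real.log_exp, mul_comm]
  rw [sigmoid_two_mul, Complex.ofReal_div,
    Complex.div_cpow_ofReal_nonneg (mul_pos (Real.exp_pos t) (sech_pos t)).le zero_le_two,
    Complex.ofReal_mul, Complex.mul_cpow_ofReal_nonneg (Real.exp_pos t).le (sech_pos t).le,
    exp_cpow, Complex.ofReal_ofNat]

lemma exp_mul_sech_cpow_eq_sigmoid_cpow (a z : ℂ) (t : ℝ) :
    Complex.exp (z * t) * (sech t : ℂ) ^ a =
      2 ^ a * ((sigmoid (2 * t) : ℂ) ^ ((a + z) / 2) *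
        (sigmoid (-(2 * t)) : ℂ) ^ ((a - z) / 2)) := by
  have sech_ne_zero : (sech t : ℂ) ≠ 0 := mod_cast (sech_pos t).ne'
  have exp_split : Complex.exp (z * t) =
      Complex.exp ((a + z) / 2 * t) * Complex.exp ((a - z) / 2 * (-t : ℝ)) := by
    rw [← Complex.exp_add]
    push_cast
    ring_nf
  have cpow_split (w : ℂ) (hw : w ≠ 0) : w ^ a = w ^ ((a + z) / 2) * w ^ ((a - z) / 2) := by
    rw [← Complex.cpow_add _ _ hw]
    ring_nf
  rw [← mul_neg, sigmoid_two_mul_cpow, sigmoid_two_mul_cpow, sech_neg, exp_split,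
    cpow_split _ sech_ne_zero, cpow_split 2 two_ne_zero]
  field_simp

lemma integrable_exp_mul_sech_cpow {a z : ℂ} (h : |z.re| < a.re) :
    Integrable fun t : ℝ => Complex.exp (z * t) * (sech t : ℂ) ^ a := by
  obtain ⟨neg_lt, lt⟩ := abs_lt.1 h
  have re_add_pos : 0 < ((a + z) / 2).re := by
    rw [Complex.div_ofNat_re, Complex.add_re]
    linarith
  have re_sub_pos : 0 < ((a - z) / 2).re := by
    rw [Complex.div_ofNat_re, Complex.sub_re]
    linarith
  simp only [exp_mul_sech_cpow_eq_sigmoid_cpow a z]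
  exact ((integrable_sigmoid_cpow_mul_sigmoid_neg_cpow re_add_pos re_sub_pos).comp_mul_left'
    two_ne_zero).const_mul _

lemma integral_exp_mul_sech_cpow (a z : ℂ) :
    ∫ t : ℝ, Complex.exp (z * t) * (sech t : ℂ) ^ a =
      2 ^ (a - 1) * Complex.betaIntegral ((a + z) / 2) ((a - z) / 2) := by
  simp only [exp_mul_sech_cpow_eq_sigmoid_cpow a z]
  rw [integral_const_mul, Measure.integral_comp_mul_left (fun t : ℝ =>
    (sigmoid t : ℂ) ^ ((a + z) / 2) * (sigmoid (-t) : ℂ) ^ ((a - z) / 2)),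
    integral_sigmoid_cpow_mul_sigmoid_neg_cpow, Complex.cpow_sub _ _ two_ne_zero, Complex.cpow_one,
    abs_of_pos (by norm_num), Complex.real_smul]
  push_cast
  ring

lemma integral_cos_mul_sech_rpow {a : ℝ} (ha : 0 < a) (β : ℝ) :
    ∫ t : ℝ, cos (β * t) * sech t ^ a =
      2 ^ (a - 1) * ‖Complex.Gamma ((a + β * Complex.I) / 2)‖ ^ 2 / Real.Gamma a := by
  have re_integrand (t : ℝ) : cos (β * t) * sech t ^ a =
      (Complex.exp (β * Complex.I * t) * (sech t : ℂ) ^ (a : ℂ)).re := by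
    rw [← Complex.ofReal_cpow (sech_pos t).le, Complex.re_mul_ofReal, mul_right_comm,
      ← Complex.ofReal_mul, Complex.exp_ofReal_mul_I_re]
  have conj_eq : (a - β * Complex.I) / 2 = starRingEnd ℂ ((a + β * Complex.I) / 2) := by
    simp [sub_eq_add_neg, Complex.conj_ofNat]
  have re_eq : 2 * ((a + β * Complex.I) / 2).re = a := by
    rw [Complex.div_ofNat_re, mul_div_cancel₀ _ two_ne_zero]
    simp
  have two_cpow : (2 : ℂ) ^ ((a : ℂ) - 1) = ((2 : ℝ) ^ (a - 1) : ℝ) := by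
    rw [Complex.ofReal_cpow zero_le_two]
    push_cast
    rfl
  have integrable := integrable_exp_mul_sech_cpow (a := a) (z := β * Complex.I) (by simpa)
  simp only [re_integrand]
  rw [← RCLike.re_eq_complex_re, integral_re integrable, integral_exp_mul_sech_cpow, conj_eq,
    betaIntegral_self_conj (by simpa), re_eq, two_cpow, ← Complex.ofReal_mul,
    RCLike.re_eq_complex_re, Complex.ofReal_re, mul_div_assoc]

section Gamma

open Complex (I)

lemma norm_Gamma_one_add_mul_I_sq {y : ℝ} (hy : y ≠ 0) :
    ‖Complex.Gamma (1 + y * I)‖ ^ 2 = π * y / sinh (π * y) := by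
  have mul_I_ne_zero : (y * I : ℂ) ≠ 0 := by simpa
  have conj_eq : starRingEnd ℂ (1 + y * I) = 1 - y * I := by simp [sub_eq_add_neg]
  apply Complex.ofReal_injective
  calc ((‖Complex.Gamma (1 + y * I)‖ ^ 2 : ℝ) : ℂ)
      = Complex.Gamma (y * I + 1) * Complex.Gamma (1 - y * I) := by
        rw [Complex.ofReal_pow, ← Complex.mul_conj', ← Complex.Gamma_conj, conj_eq, add_comm]
    _ = y * I * (π / Complex.sin (π * (y * I))) := by
        rw [Complex.Gamma_add_one _ mul_I_ne_zero, mul_assoc, Complex.Gamma_mul_Gamma_one_sub]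
    _ = (π * y / sinh (π * y) : ℝ) := by
        rw [← mul_assoc (π : ℂ), Complex.sin_mul_I]
        push_cast
        field_simp

lemma norm_Gamma_two_add_mul_I_sq (y : ℝ) :
    ‖Complex.Gamma (2 + y * I)‖ ^ 2 = (1 + y ^ 2) * ‖Complex.Gamma (1 + y * I)‖ ^ 2 := by
  have ne_zero : 1 + y * I ≠ 0 := fun h => by simpa using congrArg Complex.re h
  have norm_sq : ‖1 + y * I‖ ^ 2 = 1 + y ^ 2 := by
    rw [← Complex.ofReal_one, Complex.sq_norm, Complex.normSq_add_mul_I, one_pow]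
  rw [show 2 + y * I = 1 + y * I + 1 by ring, Complex.Gamma_add_one _ ne_zero, norm_mul, mul_pow,
    norm_sq]

end Gamma

lemma integral_cos_mul_sech_pow_four (β : ℝ) :
    ∫ t : ℝ, cos (β * t) * sech t ^ 4 =
      4 / 3 * (1 + (β / 2) ^ 2) * ‖Complex.Gamma (1 + (β / 2 : ℝ) * Complex.I)‖ ^ 2 := by
  have arg_eq : ((4 : ℝ) + β * Complex.I) / 2 = 2 + (β / 2 : ℝ) * Complex.I := by
    push_cast
    ring
  have Gamma_four : Real.Gamma 4 = 6 := Real.Gamma_ofNat_eq_factorial 3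
  calc ∫ t : ℝ, cos (β * t) * sech t ^ 4
      = ∫ t : ℝ, cos (β * t) * sech t ^ (4 : ℝ) := by simp only [Real.rpow_ofNat]
    _ = 2 ^ ((4 : ℝ) - 1) * ‖Complex.Gamma (2 + (β / 2 : ℝ) * Complex.I)‖ ^ 2 / 6 := by
        rw [integral_cos_mul_sech_rpow four_pos, arg_eq, Gamma_four]
    _ = 4 / 3 * (1 + (β / 2) ^ 2) * ‖Complex.Gamma (1 + (β / 2 : ℝ) * Complex.I)‖ ^ 2 := by
        rw [norm_Gamma_two_add_mul_I_sq]
        norm_num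
        ring

theorem cos_sech4_integral (β : ℝ) :
    ∫ ξ : ℝ, Real.cos (β * ξ) * (sech ξ) ^ 4
      = if β = 0 then 4 / 3
        else Real.pi * β * (β ^ 2 + 4) / (6 * Real.sinh (Real.pi * β / 2)) := by
  rw [integral_cos_mul_sech_pow_four]
  split_ifs with hβ
  · simp [hβ]
  · rw [norm_Gamma_one_add_mul_I_sq (by simpa), ← mul_div_assoc]
    field_simp
    ring
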